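/- Let S be a Borel subset of a Polish space and let K be a bounded linear operator mapping C_b(S) into itself which is non-negative, such that K^k is a compact operator for some integer k ≥ 1, and whose spectral radius satisfies λ(K) > 0. Then: (i) there exists ψ ∈ C_b(S) with ψ ≥ 0 pointwise and ψ not identically 0 such that Kψ = λ(K)·ψ; (ii) every real eigenvalue t of K satisfies |t| ≤ λ(K), i.e. λ(K) is the largest eigenvalue of K; and (iii) there exists a nonzero continuous linear functional m on C_b(S) which is positive (m(f) ≥ 0 whenever f ≥ 0 pointwise) and satisfies m(Kf) = λ(K)·m(f) for all f ∈ C_b(S). -/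

import Mathlib

open Filter MeasureTheory BoundedContinuousFunction Topology

/-!
The proof takes place in a Banach lattice `E` with an order unit `e`, such as `C_b(T)` with the
constant function `1`. For `s > λ` the operator `s - K` is invertible, and its inverse is monotone:
`K g ≤ s • g` gives `s⁻ⁿ • Kⁿ g ≤ g`, whose left-hand side tends to `0`. In the other direction, the
Collatz–Wielandt bound (`λ ≤ r` as soon as `K u ≤ r • u` for some `u` above a multiple of `e`) shows
that any `u ≥ 0` with `e ≤ s • u - K u` satisfies `1 ≤ (s - λ) * ‖u‖`.

Hence the solutions of `s • u - K u = e` blow up as `s` decreases to `λ`; once normalized, they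
become approximate eigenvectors, from which compactness of `K ^ k` extracts an eigenvector. The same
inequality at `s = λ` shows that the range of `λ - K` misses the interior of the positive cone, and
a hyperplane separating the two is a positive left eigenfunctional.
-/

section RootLimit

variable {a : ℕ → ℝ} {lam r : ℝ}

lemma tendsto_div_pow_of_tendsto_root (ha : ∀ n, 0 ≤ a n)
    (hlim : Tendsto (fun n : ℕ => a n ^ (1 / (n : ℝ))) atTop (𝓝 lam)) (hr : lam < r) :
    Tendsto (fun n => a n / r ^ n) atTop (𝓝 0) := by
  have hlam : 0 ≤ lam := ge_of_tendsto' hlim fun n => Real.rpow_nonneg (ha n) _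
  obtain ⟨q, hlq, hqr⟩ := exists_between hr
  have hq : 0 < q := hlam.trans_lt hlq
  have hr0 : 0 < r := hq.trans hqr
  have hgeom : Tendsto (fun n => (q / r) ^ n) atTop (𝓝 0) :=
    tendsto_pow_atTop_nhds_zero_of_lt_one (by positivity) ((div_lt_one hr0).2 hqr)
  refine squeeze_zero' (.of_forall fun n => div_nonneg (ha n) (by positivity)) ?_ hgeom
  filter_upwards [hlim.eventually_le_const hlq, eventually_ne_atTop 0] with n hn hn0
  have han : a n ≤ q ^ n := by
    rw [one_div] at hn
    exact (Real.rpow_inv_natCast_pow (ha n) hn0).symm.trans_le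
      (pow_le_pow_left₀ (Real.rpow_nonneg (ha n) _) hn n)
  rw [div_pow]
  gcongr

lemma le_of_tendsto_root_of_le_mul_pow {C : ℝ} (ha : ∀ n, 0 ≤ a n)
    (hlim : Tendsto (fun n : ℕ => a n ^ (1 / (n : ℝ))) atTop (𝓝 lam)) (hr : 0 ≤ r)
    (hbound : ∀ n, a n ≤ C * r ^ n) : lam ≤ r := by
  by_contra! hlt
  obtain ⟨q, hrq, hql⟩ := exists_between hlt
  have hq : 0 < q := hr.trans_lt hrq
  have hgeom : Tendsto (fun n => C * (r / q) ^ n) atTop (𝓝 0) := by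
    simpa using (tendsto_pow_atTop_nhds_zero_of_lt_one (by positivity)
      ((div_lt_one hq).2 hrq)).const_mul C
  have hge : ∀ᶠ n in atTop, 1 ≤ C * (r / q) ^ n := by
    filter_upwards [hlim.eventually_const_le hql, eventually_ne_atTop 0] with n hn hn0
    have hqn : q ^ n ≤ a n := by
      rw [one_div] at hn
      exact (pow_le_pow_left₀ hq.le hn n).trans_eq (Real.rpow_inv_natCast_pow (ha n) hn0)
    rw [div_pow, ← mul_div_assoc, one_le_div (by positivity)]
    exact hqn.trans (hbound n)
  exact absurd (ge_of_tendsto hgeom hge) (by norm_num)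

end RootLimit

section GelfandRadius

/-- `lam` is the spectral radius of `a` as given by Gelfand's formula. Over `ℝ` it may exceed
Mathlib's `spectralRadius ℝ a`, which only sees the real points of the spectrum. -/
def IsGelfandRadius {A : Type*} [NormedRing A] (a : A) (lam : ℝ) : Prop :=
  Tendsto (fun n : ℕ => ‖a ^ n‖ ^ (1 / (n : ℝ))) atTop (𝓝 lam)

namespace IsGelfandRadius

section Ring

variable {A : Type*} [NormedRing A] {a : A} {lam : ℝ}

lemma nonneg (hlam : IsGelfandRadius a lam) : 0 ≤ lam :=
  ge_of_tendsto' hlam fun n => by positivity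

lemma spectralRadius_le [CompleteSpace A] (𝕜 : Type*) [NormedField 𝕜] [NormedAlgebra 𝕜 A]
    (hlam : IsGelfandRadius a lam) : spectralRadius 𝕜 a ≤ ENNReal.ofReal lam := by
  refine (spectrum.spectralRadius_le_liminf_pow_nnnorm_pow_one_div 𝕜 a).trans_eq ?_
  refine ((ENNReal.tendsto_ofReal hlam).congr fun n => ?_).liminf_eq
  rw [← ENNReal.ofReal_rpow_of_nonneg (norm_nonneg _) (by positivity), ofReal_norm, enorm_eq_nnnorm]

end Ring

variable {𝕜 E : Type*} [NontriviallyNormedField 𝕜] [NormedAddCommGroup E] [NormedSpace 𝕜 E]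
  [CompleteSpace E] {K : E →L[𝕜] E} {lam : ℝ}

lemma norm_le_of_map_eq_smul (hlam : IsGelfandRadius K lam) {t : 𝕜} {ψ : E} (hψ : ψ ≠ 0)
    (hKψ : K ψ = t • ψ) : ‖t‖ ≤ lam := by
  have ht : t ∈ spectrum 𝕜 K := fun ⟨u, hu⟩ => hψ <| by
    have hker : (u : E →L[𝕜] E) ψ = 0 := by simp [hu, Algebra.algebraMap_eq_smul_one, hKψ]
    calc ψ = (↑u⁻¹ * (u : E →L[𝕜] E)) ψ := by rw [u.inv_mul, one_apply_eq_self]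
      _ = 0 := by rw [mul_apply_eq_comp, hker, map_zero]
  have hrad : (‖t‖₊ : ENNReal) ≤ ENNReal.ofReal lam :=
    (le_iSup₂ (f := fun c (_ : c ∈ spectrum 𝕜 K) => (‖c‖₊ : ENNReal)) t ht).trans
      (hlam.spectralRadius_le 𝕜)
  rwa [← enorm_eq_nnnorm, ← ofReal_norm, ENNReal.ofReal_le_ofReal_iff hlam.nonneg] at hrad

lemma exists_smul_sub_map_eq (hlam : IsGelfandRadius K lam) {s : 𝕜} (hs : lam < ‖s‖) (h : E) :
    ∃ u, s • u - K u = h := by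
  have hmem : s ∈ resolventSet 𝕜 K := by
    refine spectrum.mem_resolventSet_of_spectralRadius_lt
      ((hlam.spectralRadius_le 𝕜).trans_lt ?_)
    rwa [← enorm_eq_nnnorm, ← ofReal_norm, ENNReal.ofReal_lt_ofReal_iff_of_nonneg hlam.nonneg]
  obtain ⟨Q, hQ⟩ := hmem.exists_right_inv
  exact ⟨Q h, by simpa [Algebra.algebraMap_eq_smul_one] using congr($hQ h)⟩

end IsGelfandRadius

end GelfandRadius

section ApproximateEigenvector

variable {𝕜 E : Type*} [NontriviallyNormedField 𝕜] [NormedAddCommGroup E] [NormedSpace 𝕜 E]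
  {K : E →L[𝕜] E} {f : ℕ → E} {lam : 𝕜}

lemma tendsto_pow_map_sub_smul (hf : Tendsto (fun n => K (f n) - lam • f n) atTop (𝓝 0)) (k : ℕ) :
    Tendsto (fun n => (K ^ k) (f n) - lam ^ k • f n) atTop (𝓝 0) := by
  have hcomm : Commute K (lam • 1) := (Commute.one_right K).smul_right lam
  set B := ∑ i ∈ Finset.range k, K ^ i * (lam • 1) ^ (k - 1 - i)
  have hB : B * (K - lam • 1) = K ^ k - lam ^ k • 1 := by
    rw [hcomm.geom_sum₂_mul, smul_pow, one_pow]
  have hfactor (x : E) : B (K x - lam • x) = (K ^ k) x - lam ^ k • x := congr($hB x)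
  exact ((B.continuous.tendsto' 0 0 (map_zero B)).comp hf).congr fun n => hfactor (f n)

lemma exists_subseq_tendsto_eigenvector (hlam : lam ≠ 0) {k : ℕ}
    (hcompact : IsCompactOperator (K ^ k)) (hnorm : ∀ n, ‖f n‖ = 1)
    (hf : Tendsto (fun n => K (f n) - lam • f n) atTop (𝓝 0)) :
    ∃ (φ : ℕ → ℕ) (ψ : E), Tendsto (f ∘ φ) atTop (𝓝 ψ) ∧ ‖ψ‖ = 1 ∧ K ψ = lam • ψ := by
  obtain ⟨C, hC, hsub⟩ :=
    hcompact.image_closedBall_subset_compact (f := ((K ^ k : E →L[𝕜] E) : E →ₗ[𝕜] E)) 1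
  obtain ⟨y, -, φ, hφ, hy⟩ := hC.tendsto_subseq (x := fun n => (K ^ k) (f n))
    fun n => hsub ⟨f n, by simp [hnorm n], rfl⟩
  set ψ := (lam ^ k)⁻¹ • y
  have hψ : Tendsto (f ∘ φ) atTop (𝓝 ψ) := by
    have hdiff := (tendsto_pow_map_sub_smul hf k).comp hφ.tendsto_atTop
    simpa [Function.comp_def, smul_smul, hlam] using (hy.sub hdiff).const_smul (lam ^ k)⁻¹
  refine ⟨φ, ψ, hψ, tendsto_nhds_unique hψ.norm (by simp [hnorm]), sub_eq_zero.1 ?_⟩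
  exact tendsto_nhds_unique (((K.continuous.tendsto ψ).comp hψ).sub (hψ.const_smul lam))
    (hf.comp hφ.tendsto_atTop)

end ApproximateEigenvector

section PositiveFunctional

variable {E : Type*} [AddCommGroup E] [PartialOrder E] [IsOrderedAddMonoid E] [TopologicalSpace E]
  [IsTopologicalAddGroup E] [Module ℝ E] [ContinuousSMul ℝ E]

lemma exists_pos_smul_le_of_mem_interior_Ici {v : E} (hv : v ∈ interior (Set.Ici 0)) (e : E) :
    ∃ c : ℝ, 0 < c ∧ c • e ≤ v := by
  have hlim : Tendsto (fun c : ℝ => v - c • e) (𝓝[>] 0) (𝓝 v) :=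
    tendsto_nhdsWithin_of_tendsto_nhds <| (by fun_prop : Continuous fun c : ℝ => v - c • e).tendsto'
      0 v (by simp)
  obtain ⟨c, hc, hc0⟩ :=
    ((hlim.eventually (mem_interior_iff_mem_nhds.1 hv)).and self_mem_nhdsWithin).exists
  exact ⟨c, hc0, sub_nonneg.1 hc⟩

lemma exists_positive_functional_of_disjoint_interior_Ici [PosSMulMono ℝ E]
    (hne : (interior (Set.Ici (0 : E))).Nonempty) (V : Submodule ℝ E)
    (hV : Disjoint (interior (Set.Ici 0)) (V : Set E)) :
    ∃ m : E →L[ℝ] ℝ, m ≠ 0 ∧ (∀ f, 0 ≤ f → 0 ≤ m f) ∧ ∀ v ∈ V, m v = 0 := by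
  have hconv : Convex ℝ (Set.Ici (0 : E)) := convex_Ici 0
  obtain ⟨l, c, hlt, hle⟩ := geometric_hahn_banach_open hconv.interior isOpen_interior V.convex hV
  have hc : c ≤ 0 := by simpa using hle 0 V.zero_mem
  refine ⟨-l, ?_, fun f hf => ?_, fun v hv => ?_⟩
  · rintro hl
    obtain ⟨a, ha⟩ := hne
    have hla : l a = 0 := by rw [neg_eq_zero.1 hl, zero_apply]
    linarith [hlt a ha]
  · have hclosure : f ∈ closure (interior (Set.Ici (0 : E))) := by
      rw [hconv.closure_interior_eq_closure_of_nonempty_interior hne]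
      exact subset_closure hf
    exact le_on_closure (fun a ha => (neg_pos.2 ((hlt a ha).trans_le hc)).le)
      continuousOn_const (-l).continuous.continuousOn hclosure
  · by_contra hlv
    have hlv0 : l v ≠ 0 := fun h => hlv (by rw [_root_.neg_apply, h, neg_zero])
    have hlow := hle (((c - 1) / l v) • v) (V.smul_mem _ hv)
    rw [map_smul, smul_eq_mul, div_mul_cancel₀ _ hlv0] at hlow
    linarith

end PositiveFunctional

section OrderUnit

variable {E : Type*} [NormedAddCommGroup E] [Lattice E] [NormedSpace ℝ E] {e : E}

/-- `e` is an order unit of the normed lattice `E`: every `g` lies below some multiple of `e`, and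
`e` is scaled so that the multiple can be taken to be `‖g‖`. -/
def IsOrderUnit (e : E) : Prop := ∀ g : E, g ≤ ‖g‖ • e

namespace IsOrderUnit

lemma opNorm_le_norm_apply [HasSolidNorm E] (he : IsOrderUnit e) {K : E →L[ℝ] E}
    (hK : Monotone K) : ‖K‖ ≤ ‖K e‖ := by
  refine K.opNorm_le_bound (norm_nonneg _) fun g => ?_
  have habs : |K g| ≤ ‖g‖ • K e := by
    rw [← map_smul]
    refine abs_le'.2 ⟨hK (he g), ?_⟩
    simpa using hK (he (-g))
  calc ‖K g‖ ≤ ‖‖g‖ • K e‖ := norm_le_norm_of_abs_le_abs (habs.trans (le_abs_self _))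
    _ = ‖K e‖ * ‖g‖ := by rw [norm_smul, norm_norm, mul_comm]

variable [IsOrderedAddMonoid E] [IsOrderedModule ℝ E]

lemma nonneg (he : IsOrderUnit e) : 0 ≤ e := by
  have h : (1 + ‖e‖) • (0 : E) ≤ (1 + ‖e‖) • e := by
    simpa [add_smul, neg_le_iff_add_nonneg'] using he (-e)
  exact (smul_le_smul_iff_of_pos_left (by positivity)).1 h

lemma inv_norm_smul_le (he : IsOrderUnit e) (g : E) : ‖g‖⁻¹ • g ≤ e := by
  obtain rfl | hg := eq_or_ne g 0
  · simpa using he.nonneg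
  · exact (inv_smul_le_iff_of_pos (norm_pos_iff.2 hg)).2 (he g)

lemma mem_interior_Ici (he : IsOrderUnit e) : e ∈ interior (Set.Ici 0) := by
  refine mem_interior_iff_mem_nhds.2 (Metric.mem_nhds_iff.2 ⟨1, one_pos, fun g hg => ?_⟩)
  have hdist : ‖e - g‖ ≤ 1 := by simpa [dist_eq_norm, norm_sub_rev] using (Metric.mem_ball.1 hg).le
  have hsub : e - g ≤ e := calc
    e - g ≤ ‖e - g‖ • e := he _
    _ ≤ (1 : ℝ) • e := smul_le_smul_of_nonneg_right hdist he.nonneg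
    _ = e := one_smul ℝ e
  simpa using hsub

end IsOrderUnit

end OrderUnit

section MonotoneOperator

variable {E : Type*} [NormedAddCommGroup E] [PartialOrder E] [NormedSpace ℝ E] [PosSMulMono ℝ E]
  {K : E →L[ℝ] E}

lemma pow_map_le_pow_smul (hK : Monotone K) {r : ℝ} (hr : 0 ≤ r) {u : E} (hu : K u ≤ r • u)
    (n : ℕ) : (K ^ n) u ≤ r ^ n • u := by
  induction n with
  | zero => simp
  | succ n ih =>
    calc (K ^ (n + 1)) u = K ((K ^ n) u) := by rw [pow_succ', mul_apply_eq_comp]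
      _ ≤ K (r ^ n • u) := hK ih
      _ = r ^ n • K u := map_smul K _ u
      _ ≤ r ^ n • r • u := smul_le_smul_of_nonneg_left hu (by positivity)
      _ = r ^ (n + 1) • u := by rw [smul_smul, pow_succ]

lemma nonneg_of_map_le_smul [ClosedIicTopology E] {lam s : ℝ} (hK : Monotone K)
    (hlam : IsGelfandRadius K lam) (hs : lam < s) {g : E} (hg : K g ≤ s • g) : 0 ≤ g := by
  have hs0 : 0 < s := hlam.nonneg.trans_lt hs
  have hzero : Tendsto (fun n => (s ^ n)⁻¹ • (K ^ n) g) atTop (𝓝 0) := by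
    have hroot := (tendsto_div_pow_of_tendsto_root (fun n => norm_nonneg (K ^ n)) hlam hs).mul_const
      ‖g‖
    refine squeeze_zero_norm (fun n => ?_) (by simpa using hroot)
    rw [norm_smul, norm_inv, norm_pow, Real.norm_of_nonneg hs0.le, div_eq_inv_mul, mul_assoc]
    gcongr
    exact (K ^ n).le_opNorm g
  exact le_of_tendsto' hzero fun n =>
    (inv_smul_le_iff_of_pos (by positivity)).2 (pow_map_le_pow_smul hK hs0.le hg n)

end MonotoneOperator

section KreinRutman

variable {E : Type*} [NormedAddCommGroup E] [Lattice E] [IsOrderedAddMonoid E] [HasSolidNorm E]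
  [NormedSpace ℝ E] [IsOrderedModule ℝ E] {K : E →L[ℝ] E} {e : E} {lam s : ℝ}

lemma le_of_map_le_smul (he : IsOrderUnit e) (hK : Monotone K) (hlam : IsGelfandRadius K lam)
    {r C : ℝ} (hr : 0 ≤ r) (hC : 0 ≤ C) {u : E} (heu : e ≤ C • u) (hu : K u ≤ r • u) : lam ≤ r := by
  refine le_of_tendsto_root_of_le_mul_pow (C := C * ‖u‖) (fun n => norm_nonneg (K ^ n)) hlam hr
    fun n => ?_
  have hKn : Monotone (K ^ n) := by
    rw [FunLike.coe_pow_eq_iterate]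
    exact hK.iterate n
  have hbound : (K ^ n) e ≤ C • r ^ n • u := calc
    (K ^ n) e ≤ (K ^ n) (C • u) := hKn heu
    _ = C • (K ^ n) u := map_smul _ _ _
    _ ≤ C • r ^ n • u := smul_le_smul_of_nonneg_left (pow_map_le_pow_smul hK hr hu n) hC
  have hpos : 0 ≤ (K ^ n) e := by simpa using hKn he.nonneg
  calc ‖K ^ n‖ ≤ ‖(K ^ n) e‖ := he.opNorm_le_norm_apply hKn
    _ ≤ ‖C • r ^ n • u‖ := norm_le_norm_of_abs_le_abs (abs_le_abs_of_nonneg hpos hbound)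
    _ = C * ‖u‖ * r ^ n := by
      rw [norm_smul, norm_smul, norm_pow, Real.norm_of_nonneg hC, Real.norm_of_nonneg hr]
      ring

lemma one_le_sub_mul_norm (he : IsOrderUnit e) (hK : Monotone K) (hlam : IsGelfandRadius K lam)
    (hlam_pos : 0 < lam) (hs : 0 ≤ s) {u : E} (hu : 0 ≤ u) (hsu : e ≤ s • u - K u) :
    1 ≤ (s - lam) * ‖u‖ := by
  have heu : e ≤ s • u := hsu.trans (sub_le_self _ (by simpa using hK hu))
  have hu0 : u ≠ 0 := by
    rintro rfl
    exact hlam_pos.not_ge (le_of_map_le_smul he hK hlam le_rfl hs heu (by simp))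
  have hKu : K u ≤ max (s - ‖u‖⁻¹) 0 • u := calc
    K u ≤ s • u - e := le_sub_comm.1 hsu
    _ ≤ s • u - ‖u‖⁻¹ • u := sub_le_sub_left (he.inv_norm_smul_le u) _
    _ = (s - ‖u‖⁻¹) • u := (sub_smul _ _ _).symm
    _ ≤ max (s - ‖u‖⁻¹) 0 • u := smul_le_smul_of_nonneg_right (le_max_left _ _) hu
  have hle : lam ≤ s - ‖u‖⁻¹ :=
    (le_max_iff.1 (le_of_map_le_smul he hK hlam (le_max_right _ _) hs heu hKu)).resolve_right
      hlam_pos.not_ge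
  rw [← inv_le_iff_one_le_mul₀ (norm_pos_iff.2 hu0)]
  linarith

lemma exists_nonneg_approx_eigenvector [CompleteSpace E] (he : IsOrderUnit e) (hK : Monotone K)
    (hlam : IsGelfandRadius K lam) (hlam_pos : 0 < lam) {ε : ℝ} (hε : 0 < ε) :
    ∃ f : E, 0 ≤ f ∧ ‖f‖ = 1 ∧ ‖K f - lam • f‖ ≤ ε * (1 + ‖e‖) := by
  have hs : lam < lam + ε := lt_add_of_pos_right lam hε
  obtain ⟨u, hu⟩ := hlam.exists_smul_sub_map_eq (hs.trans_le (Real.le_norm_self _)) e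
  have hu0 : 0 ≤ u :=
    nonneg_of_map_le_smul hK hlam hs (sub_nonneg.1 (by rw [hu]; exact he.nonneg))
  have hblowup : 1 ≤ ε * ‖u‖ := by
    simpa using one_le_sub_mul_norm he hK hlam hlam_pos (hlam_pos.trans hs).le hu0 hu.ge
  have hnorm : 0 < ‖u‖ := pos_of_mul_pos_right (one_pos.trans_le hblowup) hε.le
  set f := ‖u‖⁻¹ • u
  have hf : ‖f‖ = 1 := by rw [norm_smul, norm_inv, norm_norm, inv_mul_cancel₀ hnorm.ne']
  have hKf : K f - lam • f = ε • f - ‖u‖⁻¹ • e := by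
    simp only [f, map_smul, ← hu, smul_sub, add_smul, smul_add, smul_comm _ ‖u‖⁻¹]
    abel
  refine ⟨f, smul_nonneg (by positivity) hu0, hf, ?_⟩
  calc ‖K f - lam • f‖ ≤ ‖ε • f‖ + ‖‖u‖⁻¹ • e‖ := hKf ▸ norm_sub_le _ _
    _ = ε + ‖u‖⁻¹ * ‖e‖ := by
      rw [norm_smul ε f, hf, norm_smul, norm_inv, norm_norm, Real.norm_of_nonneg hε.le, mul_one]
    _ ≤ ε + ε * ‖e‖ := by
      gcongr
      exact (inv_le_iff_one_le_mul₀ hnorm).2 hblowup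
    _ = ε * (1 + ‖e‖) := by ring

lemma exists_nonneg_eigenvector [CompleteSpace E] (he : IsOrderUnit e) (hK : Monotone K) {k : ℕ}
    (hcompact : IsCompactOperator (K ^ k)) (hlam : IsGelfandRadius K lam) (hlam_pos : 0 < lam) :
    ∃ ψ : E, 0 ≤ ψ ∧ ψ ≠ 0 ∧ K ψ = lam • ψ := by
  choose f hf0 hf1 hf using fun n : ℕ =>
    exists_nonneg_approx_eigenvector he hK hlam hlam_pos (Nat.one_div_pos_of_nat (α := ℝ) (n := n))
  have hzero : Tendsto (fun n => K (f n) - lam • f n) atTop (𝓝 0) :=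
    squeeze_zero_norm hf (by
      simpa using tendsto_one_div_add_atTop_nhds_zero_nat.mul_const (1 + ‖e‖))
  obtain ⟨φ, ψ, hψ, hψ1, hKψ⟩ := exists_subseq_tendsto_eigenvector hlam_pos.ne' hcompact hf1 hzero
  exact ⟨ψ, ge_of_tendsto' hψ fun n => hf0 (φ n), norm_ne_zero_iff.1 (by simp [hψ1]), hKψ⟩

lemma not_le_smul_sub_map (he : IsOrderUnit e) (hK : Monotone K) (hlam : IsGelfandRadius K lam)
    (hlam_pos : 0 < lam) (g : E) :
    ¬ e ≤ lam • g - K g := by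
  intro hg
  set δ := (1 + ‖g‖)⁻¹
  have hδ : δ * ‖g‖ ≤ 1 := by
    rw [inv_mul_le_one₀ (by positivity)]
    linarith
  have hδe : -(δ • g) ≤ e := calc
    -(δ • g) ≤ ‖-(δ • g)‖ • e := he _
    _ ≤ (1 : ℝ) • e := smul_le_smul_of_nonneg_right
      (by rwa [norm_neg, norm_smul, Real.norm_of_nonneg (by positivity)]) he.nonneg
    _ = e := one_smul ℝ e
  have hKg : K g ≤ (lam + δ) • g := by
    rw [add_smul, ← sub_nonneg]
    calc (0 : E) ≤ lam • g - K g + δ • g := neg_le_iff_add_nonneg.1 (hδe.trans hg)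
      _ = lam • g + δ • g - K g := by abel
  have hg0 : 0 ≤ g :=
    nonneg_of_map_le_smul hK hlam (lt_add_of_pos_right lam (by positivity)) hKg
  have hone := one_le_sub_mul_norm he hK hlam hlam_pos hlam_pos.le hg0 hg
  norm_num at hone

lemma exists_positive_eigenfunctional (he : IsOrderUnit e) (hK : Monotone K)
    (hlam : IsGelfandRadius K lam) (hlam_pos : 0 < lam) :
    ∃ m : E →L[ℝ] ℝ, m ≠ 0 ∧ (∀ f, 0 ≤ f → 0 ≤ m f) ∧ ∀ f, m (K f) = lam * m f := by
  set V := (lam • (1 : E →L[ℝ] E) - K).range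
  have hV : Disjoint (interior (Set.Ici 0)) (V : Set E) := by
    refine Set.disjoint_left.2 ?_
    rintro _ hv ⟨g, rfl⟩
    obtain ⟨c, hc, hcv⟩ := exists_pos_smul_le_of_mem_interior_Ici hv e
    refine not_le_smul_sub_map he hK hlam hlam_pos (c⁻¹ • g) ?_
    simpa [smul_sub, smul_comm lam] using (le_inv_smul_iff_of_pos hc).2 hcv
  obtain ⟨m, hm0, hmpos, hmV⟩ :=
    exists_positive_functional_of_disjoint_interior_Ici ⟨e, he.mem_interior_Ici⟩ V hV
  refine ⟨m, hm0, hmpos, fun f => ?_⟩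
  have hmf : m (lam • f - K f) = 0 := hmV _ ⟨f, by simp⟩
  rw [map_sub, map_smul, smul_eq_mul] at hmf
  exact (sub_eq_zero.1 hmf).symm

end KreinRutman

theorem krein_rutman_persistence_general {E : Type*} [NormedAddCommGroup E] [Lattice E]
    [IsOrderedAddMonoid E] [HasSolidNorm E] [NormedSpace ℝ E] [IsOrderedModule ℝ E]
    [CompleteSpace E] {e : E} (he : IsOrderUnit e) {K : E →L[ℝ] E} (hK : Monotone K) {k : ℕ}
    (hcompact : IsCompactOperator (K ^ k)) {lam : ℝ} (hlam : IsGelfandRadius K lam)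
    (hlam_pos : 0 < lam) :
    (∃ ψ : E, 0 ≤ ψ ∧ ψ ≠ 0 ∧ K ψ = lam • ψ) ∧
    (∀ t : ℝ, (∃ ψ : E, ψ ≠ 0 ∧ K ψ = t • ψ) → |t| ≤ lam) ∧
    (∃ m : E →L[ℝ] ℝ, m ≠ 0 ∧ (∀ f, 0 ≤ f → 0 ≤ m f) ∧ ∀ f, m (K f) = lam * m f) :=
  ⟨exists_nonneg_eigenvector he hK hcompact hlam hlam_pos,
    fun _ ⟨_, hψ, hKψ⟩ => hlam.norm_le_of_map_eq_smul hψ hKψ,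
    exists_positive_eigenfunctional he hK hlam hlam_pos⟩

section BoundedContinuousFunction

variable {T : Type*} [TopologicalSpace T]

instance : IsOrderedModule ℝ (T →ᵇ ℝ) where
  smul_le_smul_of_nonneg_left _ hc _ _ hfg x := mul_le_mul_of_nonneg_left (hfg x) hc
  smul_le_smul_of_nonneg_right _ hf _ _ hcd x := mul_le_mul_of_nonneg_right hcd (hf x)

lemma isOrderUnit_one : IsOrderUnit (1 : T →ᵇ ℝ) := fun g x => by
  simpa using g.apply_le_norm x

end BoundedContinuousFunction

/-- Let `S` be a Borel subset of a Polish space and `K` a bounded linear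
operator on `C_b(S)` which is non-negative, such that `K^k` is compact for some `k ≥ 1` and
whose spectral radius `λ(K)` is positive. Then: (i) `λ(K)` admits a non-negative, nonzero
continuous bounded eigenfunction; (ii) every real eigenvalue `t` of `K` satisfies
`|t| ≤ λ(K)`; (iii) there is a nonzero positive continuous linear functional `m` on `C_b(S)`
with `m ∘ K = λ(K) · m`. -/
theorem krein_rutman_persistence
    {X : Type*} [TopologicalSpace X] [PolishSpace X]
    [MeasurableSpace X] [BorelSpace X]
    (S : Set X) (hS : MeasurableSet S)
    (K : (S →ᵇ ℝ) →L[ℝ] (S →ᵇ ℝ))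
    (hpos : ∀ g : S →ᵇ ℝ, (∀ x, 0 ≤ g x) → ∀ x, 0 ≤ (K g) x)
    (k : ℕ) (hk : 1 ≤ k) (hcompact : IsCompactOperator (⇑(K ^ k)))
    (lam : ℝ)
    (hlam : Tendsto (fun n : ℕ => ‖K ^ n‖ ^ (1 / (n : ℝ))) atTop (𝓝 lam))
    (hlam_pos : 0 < lam) :
    (∃ ψ : S →ᵇ ℝ, (∀ x, 0 ≤ ψ x) ∧ ψ ≠ 0 ∧ K ψ = lam • ψ) ∧
    (∀ t : ℝ, (∃ ψ : S →ᵇ ℝ, ψ ≠ 0 ∧ K ψ = t • ψ) → |t| ≤ lam) ∧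
    (∃ m : (S →ᵇ ℝ) →L[ℝ] ℝ, m ≠ 0 ∧ (∀ f : S →ᵇ ℝ, (∀ x, 0 ≤ f x) → 0 ≤ m f) ∧
      ∀ f : S →ᵇ ℝ, m (K f) = lam * m f) := by
  have hK : Monotone K := (monotone_iff_map_nonneg K).2 hpos
  exact krein_rutman_persistence_general isOrderUnit_one hK hcompact hlam hlam_pos
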